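/- Spectral (Kusuoka) representation: for every X ∈ L^ψ, ρ_{φ,β}(X) = sup_σ ∫₀¹ σ(u)·F_X^{-1}(u) du, where the supremum is taken over all non-decreasing functions σ : [0,1] → [0,∞] with ∫₀¹ σ(u) du = 1 and ∫₀¹ φ(σ(u)) du ≤ β. -/

import Mathlib

open MeasureTheory
open scoped ENNReal

noncomputable section

/-- A divergence function: convex, lower semicontinuous `φ : ℝ → ℝ ∪ {∞}` with `φ 1 = 0`,
effective domain `[0, ∞)` and superlinear growth `φ x / x → ∞` as `x → ∞`. -/
structure IsDivergenceFunction (φ : ℝ → EReal) : Prop where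
  convex : ∀ x y a b : ℝ, 0 < a → 0 < b → a + b = 1 →
    φ (a * x + b * y) ≤ (a : EReal) * φ x + (b : EReal) * φ y
  lsc : LowerSemicontinuous φ
  ne_bot : ∀ x : ℝ, φ x ≠ ⊥
  one : φ 1 = 0
  domain : ∀ x : ℝ, φ x ≠ ⊤ ↔ 0 ≤ x
  superlinear : ∀ M : ℝ, ∃ N : ℝ, ∀ x : ℝ, N ≤ x → ((M * x : ℝ) : EReal) ≤ φ x

/-- The convex conjugate `ψ(y) = sup_z (y·z − φ(z))`, as an extended real number. -/
def psiE (φ : ℝ → EReal) (y : ℝ) : EReal := ⨆ z : ℝ, (((y * z : ℝ) : EReal) - φ z)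

/-- The convex conjugate, as a real number (it is finite for divergence functions). -/
def psiR (φ : ℝ → EReal) (y : ℝ) : ℝ := (psiE φ y).toReal

open Classical in
/-- The objective `t (β + μ + E ψ(X/t − μ))` of the φ-divergence risk measure;
the value is `⊤` when `ψ(X/t − μ)` fails to be integrable. -/
def rhoObj {Ω : Type*} [MeasurableSpace Ω] (φ : ℝ → EReal) (β : ℝ) (P : Measure Ω)
    (X : Ω → ℝ) (μ t : ℝ) : EReal :=
  if Integrable (fun ω => psiR φ (X ω / t - μ)) P then
    (((t * (β + μ + ∫ ω, psiR φ (X ω / t - μ) ∂P)) : ℝ) : EReal)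
  else ⊤

/-- The φ-divergence risk measure `ρ_{φ,β}(X) = inf_{μ ∈ ℝ, t > 0} t (β + μ + E ψ(X/t − μ))`. -/
def rhoDiv {Ω : Type*} [MeasurableSpace Ω] (φ : ℝ → EReal) (β : ℝ) (P : Measure Ω)
    (X : Ω → ℝ) : EReal :=
  ⨅ (μ : ℝ) (t : ℝ) (_ : 0 < t), rhoObj φ β P X μ t

/-- The (generalized inverse) quantile function `F_X⁻¹(u) = inf { x : P(X ≤ x) ≥ u }`. -/
def quantile {Ω : Type*} [MeasurableSpace Ω] (P : Measure Ω) (X : Ω → ℝ) (u : ℝ) : ℝ :=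
  sInf {x : ℝ | u ≤ (P {ω | X ω ≤ x}).toReal}

/-! ### Real-valued facts about divergence functions -/

/-- Real-valued version of the divergence function. -/
def phiR (φ : ℝ → EReal) (z : ℝ) : ℝ := (φ z).toReal

lemma phi_eq_coe {φ : ℝ → EReal} (hφ : IsDivergenceFunction φ) {z : ℝ} (hz : 0 ≤ z) :
    φ z = (phiR φ z : EReal) :=
  (EReal.coe_toReal ((hφ.domain z).2 hz) (hφ.ne_bot z)).symm

lemma phi_eq_top {φ : ℝ → EReal} (hφ : IsDivergenceFunction φ) {z : ℝ} (hz : z < 0) :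
    φ z = ⊤ := by
  by_contra h
  exact absurd ((hφ.domain z).1 h) (not_le.2 hz)

lemma phiR_one {φ : ℝ → EReal} (hφ : IsDivergenceFunction φ) : phiR φ 1 = 0 := by
  simp [phiR, hφ.one]

lemma phiR_measurable {φ : ℝ → EReal} (hφ : IsDivergenceFunction φ) : Measurable (phiR φ) :=
  hφ.lsc.measurable.ereal_toReal

lemma phiR_convexOn {φ : ℝ → EReal} (hφ : IsDivergenceFunction φ) :
    ConvexOn ℝ (Set.Ici 0) (phiR φ) := by
  rw [convexOn_iff_forall_pos]
  refine ⟨convex_Ici 0, fun x hx y hy a b ha hb hab => ?_⟩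
  have h := hφ.convex x y a b ha hb hab
  have hx' : (0:ℝ) ≤ x := hx
  have hy' : (0:ℝ) ≤ y := hy
  rw [phi_eq_coe hφ (by positivity), phi_eq_coe hφ hx', phi_eq_coe hφ hy'] at h
  simp only [smul_eq_mul]
  exact_mod_cast h

/-- Existence of a maximiser in the conjugate. -/
lemma exists_argmax {φ : ℝ → EReal} (hφ : IsDivergenceFunction φ) (y : ℝ) :
    ∃ z : ℝ, 0 ≤ z ∧ ∀ w : ℝ, 0 ≤ w → y * w - phiR φ w ≤ y * z - phiR φ z := by
  obtain ⟨N, hN⟩ := hφ.superlinear (y + |y|)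
  have hlsc : LowerSemicontinuous (fun z : ℝ => φ z + ((-(y * z) : ℝ) : EReal)) := by
    refine hφ.lsc.add' ?_ ?_
    · exact (continuous_coe_real_ereal.comp (by fun_prop)).lowerSemicontinuous
    · intro x
      exact EReal.continuousAt_add (Or.inr (EReal.coe_ne_bot _)) (Or.inr (EReal.coe_ne_top _))
  obtain ⟨z, hz, hmin⟩ := (hlsc.lowerSemicontinuousOn (Set.Icc 0 (max N 1))).exists_isMinOn
    ⟨1, by simp⟩ isCompact_Icc
  have hmin' : ∀ w ∈ Set.Icc (0:ℝ) (max N 1), y * w - phiR φ w ≤ y * z - phiR φ z := by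
    intro w hw
    have h := isMinOn_iff.1 hmin w hw
    rw [phi_eq_coe hφ hw.1, phi_eq_coe hφ hz.1] at h
    have h' : phiR φ z + -(y * z) ≤ phiR φ w + -(y * w) := by exact_mod_cast h
    linarith
  refine ⟨z, hz.1, fun w hw => ?_⟩
  rcases le_total w (max N 1) with h | h
  · exact hmin' w ⟨hw, h⟩
  · have h1 := hmin' 1 (by simp)
    have h2 := hN w (le_trans (le_max_left _ _) h)
    rw [phi_eq_coe hφ hw] at h2
    have h3 : (y + |y|) * w ≤ phiR φ w := by exact_mod_cast h2
    have h4 : 1 ≤ w := le_trans (le_max_right _ _) h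
    rw [phiR_one hφ] at h1
    nlinarith [abs_nonneg y, neg_abs_le y]

/-- A selection of maximisers. -/
def zst (φ : ℝ → EReal) (hφ : IsDivergenceFunction φ) (y : ℝ) : ℝ :=
  (exists_argmax hφ y).choose

lemma zst_nonneg {φ : ℝ → EReal} (hφ : IsDivergenceFunction φ) (y : ℝ) : 0 ≤ zst φ hφ y :=
  (exists_argmax hφ y).choose_spec.1

lemma zst_max {φ : ℝ → EReal} (hφ : IsDivergenceFunction φ) (y w : ℝ) (hw : 0 ≤ w) :
    y * w - phiR φ w ≤ y * zst φ hφ y - phiR φ (zst φ hφ y) :=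
  (exists_argmax hφ y).choose_spec.2 w hw

lemma zst_mono {φ : ℝ → EReal} (hφ : IsDivergenceFunction φ) : Monotone (zst φ hφ) := by
  intro y y' h
  rcases h.eq_or_lt with rfl | h
  · rfl
  have h1 := zst_max hφ y _ (zst_nonneg hφ y')
  have h2 := zst_max hφ y' _ (zst_nonneg hφ y)
  nlinarith

lemma psiR_eq {φ : ℝ → EReal} (hφ : IsDivergenceFunction φ) (y : ℝ) :
    psiR φ y = y * zst φ hφ y - phiR φ (zst φ hφ y) := by
  have : psiE φ y = ((y * zst φ hφ y - phiR φ (zst φ hφ y) : ℝ) : EReal) := by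
    apply le_antisymm
    · refine iSup_le fun z => ?_
      rcases lt_or_ge z 0 with hz | hz
      · rw [phi_eq_top hφ hz]; simp
      · rw [phi_eq_coe hφ hz]
        exact_mod_cast zst_max hφ y z hz
    · refine le_trans (le_of_eq ?_) (le_iSup _ (zst φ hφ y))
      rw [phi_eq_coe hφ (zst_nonneg hφ y)]
      push_cast; rfl
  rw [psiR, this, EReal.toReal_coe]

lemma young {φ : ℝ → EReal} (hφ : IsDivergenceFunction φ) (y w : ℝ) (hw : 0 ≤ w) :
    y * w - phiR φ w ≤ psiR φ y := by
  rw [psiR_eq hφ]; exact zst_max hφ y w hw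

lemma psiR_mono {φ : ℝ → EReal} (hφ : IsDivergenceFunction φ) : Monotone (psiR φ) := by
  intro y y' h
  rw [psiR_eq hφ y]
  refine le_trans ?_ (young hφ y' _ (zst_nonneg hφ y))
  nlinarith [zst_nonneg hφ y]

lemma phiR_bdd {φ : ℝ → EReal} (hφ : IsDivergenceFunction φ) (K : ℝ) (hK : 0 ≤ K) :
    ∃ C, ∀ z, 0 ≤ z → z ≤ K → |phiR φ z| ≤ C := by
  refine ⟨max (max (phiR φ 0) (phiR φ K)) (psiR φ 0), fun z hz hzK => ?_⟩
  rw [abs_le]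
  constructor
  · have := young hφ 0 z hz
    have h2 := le_max_right (max (phiR φ 0) (phiR φ K)) (psiR φ 0)
    linarith
  · exact le_trans ((phiR_convexOn hφ).le_max_of_mem_Icc (Set.mem_Ici.2 le_rfl)
      (Set.mem_Ici.2 hK) ⟨hz, hzK⟩) (le_max_left _ _)

lemma phiR_contAt {φ : ℝ → EReal} (hφ : IsDivergenceFunction φ) : ContinuousAt (phiR φ) 1 := by
  have := (phiR_convexOn hφ).continuousOn_interior
  rw [interior_Ici] at this
  exact this.continuousAt (Ioi_mem_nhds (by norm_num))

/-! ### The quantile function -/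

/-- Lebesgue measure on the unit interval. -/
abbrev nuI : Measure ℝ := volume.restrict (Set.Icc (0 : ℝ) 1)

lemma nuI_eq : nuI = volume.restrict (Set.Ioo (0 : ℝ) 1) :=
  Measure.restrict_congr_set Ioo_ae_eq_Icc.symm

instance nuI_prob : IsProbabilityMeasure nuI :=
  ⟨by simp [nuI]⟩

lemma nuI_ae : ∀ᵐ u ∂nuI, u ∈ Set.Ioo (0:ℝ) 1 := by
  rw [nuI_eq]; exact ae_restrict_mem measurableSet_Ioo

section quant

variable {Ω : Type*} [MeasurableSpace Ω]

lemma quantile_le_iff (P : Measure Ω) [IsProbabilityMeasure P] (X : Ω → ℝ)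
    (hX : AEMeasurable X P) {u : ℝ} (hu : u ∈ Set.Ioo (0:ℝ) 1) (x : ℝ) :
    quantile P X u ≤ x ↔ u ≤ (P {ω | X ω ≤ x}).toReal := by
  have : IsProbabilityMeasure (P.map X) := Measure.isProbabilityMeasure_map hX
  have hF : ∀ x, (P {ω | X ω ≤ x}).toReal = ProbabilityTheory.cdf (P.map X) x := by
    intro x
    rw [ProbabilityTheory.cdf_eq_real, measureReal_def,
      Measure.map_apply_of_aemeasurable hX measurableSet_Iic]
    rfl
  unfold quantile
  simp only [hF]
  set F := ProbabilityTheory.cdf (P.map X) with hFdef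
  have hne : {x : ℝ | u ≤ F x}.Nonempty := by
    obtain ⟨x, hx⟩ := ((ProbabilityTheory.tendsto_cdf_atTop (P.map X)).eventually
      (lt_mem_nhds hu.2)).exists
    exact ⟨x, hx.le⟩
  have hbd : BddBelow {x : ℝ | u ≤ F x} := by
    obtain ⟨x, hx⟩ := ((ProbabilityTheory.tendsto_cdf_atBot (P.map X)).eventually
      (gt_mem_nhds hu.1)).exists
    refine ⟨x, fun y hy => ?_⟩
    by_contra h
    have h1 : F y ≤ F x := F.mono (not_le.1 h).le
    have h2 : u ≤ F y := hy
    have h3 : F x < u := hx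
    linarith
  constructor
  · intro h
    have hall : ∀ y, x < y → u ≤ F y := by
      intro y hy
      obtain ⟨w, hw, hwy⟩ := exists_lt_of_csInf_lt hne (lt_of_le_of_lt h hy)
      exact le_trans hw (F.mono hwy.le)
    have hc := (F.right_continuous x)
    have hc' : Filter.Tendsto F (nhdsWithin x (Set.Ioi x)) (nhds (F x)) :=
      hc.tendsto.mono_left (nhdsWithin_mono _ Set.Ioi_subset_Ici_self)
    exact ge_of_tendsto hc' (by
      filter_upwards [self_mem_nhdsWithin] with y hy using hall y hy)
  · intro h
    exact csInf_le hbd h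

lemma quantile_mono (P : Measure Ω) [IsProbabilityMeasure P] (X : Ω → ℝ)
    (hX : AEMeasurable X P) : MonotoneOn (quantile P X) (Set.Ioo (0:ℝ) 1) := by
  intro u hu v hv huv
  rw [quantile_le_iff P X hX hu]
  exact huv.trans ((quantile_le_iff P X hX hv _).1 le_rfl)

lemma monoOn_aemeas {f : ℝ → ℝ} (h : MonotoneOn f (Set.Ioo (0:ℝ) 1)) : AEMeasurable f nuI := by
  rw [nuI_eq]
  exact aemeasurable_restrict_of_monotoneOn measurableSet_Ioo h

lemma quantile_map (P : Measure Ω) [IsProbabilityMeasure P] (X : Ω → ℝ)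
    (hX : AEMeasurable X P) : nuI.map (quantile P X) = P.map X := by
  have hq := monoOn_aemeas (quantile_mono P X hX)
  have : IsProbabilityMeasure (nuI.map (quantile P X)) := Measure.isProbabilityMeasure_map hq
  have : IsProbabilityMeasure (P.map X) := Measure.isProbabilityMeasure_map hX
  refine Measure.ext_of_Iic _ _ fun x => ?_
  rw [Measure.map_apply_of_aemeasurable hq measurableSet_Iic,
    Measure.map_apply_of_aemeasurable hX measurableSet_Iic]
  have hp : (P {ω | X ω ≤ x}).toReal ≤ 1 := by
    have : P {ω | X ω ≤ x} ≤ 1 := prob_le_one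
    exact ENNReal.toReal_le_of_le_ofReal (by norm_num) (by simpa using this)
  have h1 : nuI (quantile P X ⁻¹' Set.Iic x) = nuI (Set.Iic ((P {ω | X ω ≤ x}).toReal)) := by
    apply measure_congr
    filter_upwards [nuI_ae] with u hu
    exact propext (quantile_le_iff P X hX hu x)
  rw [h1, Measure.restrict_apply measurableSet_Iic]
  have h2 : Set.Iic ((P {ω | X ω ≤ x}).toReal) ∩ Set.Icc (0:ℝ) 1
      = Set.Icc 0 ((P {ω | X ω ≤ x}).toReal) := by
    ext u; simp only [Set.mem_inter_iff, Set.mem_Iic, Set.mem_Icc]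
    constructor
    · rintro ⟨a, b, c⟩; exact ⟨b, a⟩
    · rintro ⟨a, b⟩; exact ⟨b, a, b.trans hp⟩
  rw [h2, Real.volume_Icc, sub_zero, ENNReal.ofReal_toReal (measure_ne_top _ _)]
  rfl

lemma quantile_ident (P : Measure Ω) [IsProbabilityMeasure P] (X : Ω → ℝ)
    (hX : AEMeasurable X P) :
    ProbabilityTheory.IdentDistrib (quantile P X) X nuI P :=
  ⟨monoOn_aemeas (quantile_mono P X hX), hX, quantile_map P X hX⟩

end quant

/-! ### Lagrange duality over bounded monotone densities -/

/-- Bounded nonnegative densities, nondecreasing on the open unit interval. -/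
structure Adm (Z : ℝ → ℝ) : Prop where
  mono : MonotoneOn Z (Set.Ioo (0:ℝ) 1)
  nonneg : ∀ u, 0 ≤ Z u
  bdd : ∃ K, ∀ u, Z u ≤ K

lemma Adm.abs_bdd {Z : ℝ → ℝ} (h : Adm Z) : ∃ K, ∀ u, ‖Z u‖ ≤ K := by
  obtain ⟨K, hK⟩ := h.bdd
  exact ⟨K, fun u => by rw [Real.norm_of_nonneg (h.nonneg u)]; exact hK u⟩

lemma Adm.integrable {Z : ℝ → ℝ} (h : Adm Z) : Integrable Z nuI := by
  obtain ⟨K, hK⟩ := h.abs_bdd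
  exact Integrable.of_bound (monoOn_aemeas h.mono).aestronglyMeasurable K (Filter.Eventually.of_forall hK)

lemma Adm.integrable_phi {Z : ℝ → ℝ} (h : Adm Z) {φ : ℝ → EReal} (hφ : IsDivergenceFunction φ) :
    Integrable (fun u => phiR φ (Z u)) nuI := by
  obtain ⟨K, hK⟩ := h.bdd
  obtain ⟨C, hC⟩ := phiR_bdd hφ K ((h.nonneg 0).trans (hK 0))
  exact Integrable.of_bound ((phiR_measurable hφ).comp_aemeasurable
    (monoOn_aemeas h.mono)).aestronglyMeasurable C
    (Filter.Eventually.of_forall fun u => hC _ (h.nonneg u) (hK u))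

lemma Adm.integrable_mul {Z : ℝ → ℝ} (h : Adm Z) {q : ℝ → ℝ} (hq : Integrable q nuI) :
    Integrable (fun u => Z u * q u) nuI := by
  obtain ⟨K, hK⟩ := h.abs_bdd
  exact hq.bdd_mul (monoOn_aemeas h.mono).aestronglyMeasurable (Filter.Eventually.of_forall hK)

lemma Adm.const {a : ℝ} (ha : 0 ≤ a) : Adm (fun _ => a) :=
  ⟨fun _ _ _ _ _ => le_rfl, fun _ => ha, a, fun _ => le_rfl⟩

lemma Adm.comb {Z W : ℝ → ℝ} (hZ : Adm Z) (hW : Adm W) {a b : ℝ} (ha : 0 ≤ a) (hb : 0 ≤ b) :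
    Adm (fun u => a * Z u + b * W u) := by
  obtain ⟨K, hK⟩ := hZ.bdd
  obtain ⟨L, hL⟩ := hW.bdd
  refine ⟨fun u hu v hv huv => ?_, fun u => ?_, a * K + b * L, fun u => ?_⟩
  · exact add_le_add (mul_le_mul_of_nonneg_left (hZ.mono hu hv huv) ha)
      (mul_le_mul_of_nonneg_left (hW.mono hu hv huv) hb)
  · exact add_nonneg (mul_nonneg ha (hZ.nonneg u)) (mul_nonneg hb (hW.nonneg u))
  · exact add_le_add (mul_le_mul_of_nonneg_left (hK u) ha) (mul_le_mul_of_nonneg_left (hL u) hb)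

/-- The convex set which is separated from the optimal point. -/
def sepSet (φ : ℝ → EReal) (q : ℝ → ℝ) : Set (ℝ × ℝ × ℝ) :=
  {p | ∃ Z, Adm Z ∧ p.1 = ∫ u, Z u ∂nuI ∧ (∫ u, phiR φ (Z u) ∂nuI) ≤ p.2.1 ∧
    p.2.2 < ∫ u, Z u * q u ∂nuI}

lemma sepSet_convex {φ : ℝ → EReal} (hφ : IsDivergenceFunction φ) {q : ℝ → ℝ}
    (hq : Integrable q nuI) : Convex ℝ (sepSet φ q) := by
  rw [convex_iff_forall_pos]
  rintro ⟨a₁, b₁, c₁⟩ ⟨Z, hZ, h1, h2, h3⟩ ⟨a₂, b₂, c₂⟩ ⟨W, hW, k1, k2, k3⟩ a b ha hb hab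
  simp only at h1 h2 h3 k1 k2 k3
  refine ⟨_, hZ.comb hW ha.le hb.le, ?_, ?_, ?_⟩
  · simp only [Prod.smul_mk, Prod.mk_add_mk, smul_eq_mul]
    rw [integral_add (hZ.integrable.const_mul a) (hW.integrable.const_mul b),
      integral_const_mul, integral_const_mul, h1, k1]
  · simp only [Prod.smul_mk, Prod.mk_add_mk, smul_eq_mul]
    calc _ ≤ ∫ u, (a * phiR φ (Z u) + b * phiR φ (W u)) ∂nuI := by
          refine integral_mono ((hZ.comb hW ha.le hb.le).integrable_phi hφ)
            (((hZ.integrable_phi hφ).const_mul a).add ((hW.integrable_phi hφ).const_mul b)) ?_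
          intro u
          exact (phiR_convexOn hφ).2 (hZ.nonneg u) (hW.nonneg u) ha.le hb.le hab
      _ = a * (∫ u, phiR φ (Z u) ∂nuI) + b * (∫ u, phiR φ (W u) ∂nuI) := by
          rw [integral_add ((hZ.integrable_phi hφ).const_mul a)
            ((hW.integrable_phi hφ).const_mul b), integral_const_mul, integral_const_mul]
      _ ≤ _ := by gcongr
  · simp only [Prod.smul_mk, Prod.mk_add_mk, smul_eq_mul]
    have : (∫ u, (a * Z u + b * W u) * q u ∂nuI)
        = a * (∫ u, Z u * q u ∂nuI) + b * (∫ u, W u * q u ∂nuI) := by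
      rw [← integral_const_mul, ← integral_const_mul, ← integral_add
        ((hZ.integrable_mul hq).const_mul a) ((hW.integrable_mul hq).const_mul b)]
      congr 1; ext u; ring
    rw [this]
    gcongr

lemma sepSet_const {φ : ℝ → EReal} {q : ℝ → ℝ} {a b c : ℝ} (ha : 0 ≤ a) (hb : phiR φ a ≤ b)
    (hc : c < a * ∫ u, q u ∂nuI) : (a, b, c) ∈ sepSet φ q := by
  refine ⟨fun _ => a, Adm.const ha, by simp, by simpa using hb, ?_⟩
  simpa [integral_const_mul] using hc

lemma sepSet_interior {φ : ℝ → EReal} (hφ : IsDivergenceFunction φ) {q : ℝ → ℝ} {β : ℝ}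
    (hβ : 0 < β) {c : ℝ} (hc : c < ∫ u, q u ∂nuI) : (1, β, c) ∈ interior (sepSet φ q) := by
  rw [mem_interior_iff_mem_nhds]
  have t1 : Filter.Tendsto (fun p : ℝ × ℝ × ℝ => p.1) (nhds (1, β, c)) (nhds 1) :=
    continuous_fst.tendsto _
  have t2 : Filter.Tendsto (fun p : ℝ × ℝ × ℝ => p.2.1) (nhds (1, β, c)) (nhds β) :=
    (continuous_fst.comp continuous_snd).tendsto _
  have t3 : Filter.Tendsto (fun p : ℝ × ℝ × ℝ => p.1 * (∫ u, q u ∂nuI) - p.2.2)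
      (nhds (1, β, c)) (nhds (1 * (∫ u, q u ∂nuI) - c)) :=
    (Continuous.tendsto (by fun_prop) _)
  have hp := phiR_contAt hφ
  have t4 : Filter.Tendsto (fun p : ℝ × ℝ × ℝ => phiR φ p.1) (nhds (1, β, c)) (nhds 0) := by
    have := hp.tendsto.comp t1
    rwa [phiR_one hφ] at this
  filter_upwards [t1.eventually (lt_mem_nhds (show (0:ℝ) < 1 by norm_num)),
    t2.eventually (lt_mem_nhds (show β / 2 < β by linarith)),
    t3.eventually (lt_mem_nhds (show (0:ℝ) < 1 * (∫ u, q u ∂nuI) - c by linarith)),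
    t4.eventually (gt_mem_nhds (show (0:ℝ) < β / 2 by linarith))] with p h1 h2 h3 h4
  exact sepSet_const h1.le (h4.trans h2).le (by linarith)

lemma lagrange {φ : ℝ → EReal} (hφ : IsDivergenceFunction φ) {q : ℝ → ℝ}
    (hq : Integrable q nuI) {β : ℝ} (hβ : 0 < β) {V : ℝ}
    (hV : ∀ Z, Adm Z → (∫ u, Z u ∂nuI) = 1 → (∫ u, phiR φ (Z u) ∂nuI) ≤ β →
      (∫ u, Z u * q u ∂nuI) ≤ V) :
    ∃ t m : ℝ, 0 ≤ t ∧ ∀ Z, Adm Z →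
      (∫ u, Z u * q u ∂nuI) - m * (∫ u, Z u ∂nuI) - t * (∫ u, phiR φ (Z u) ∂nuI)
        ≤ V - m - t * β := by
  have hnot : (1, β, V) ∉ interior (sepSet φ q) := by
    intro h
    obtain ⟨Z, hZ, h1, h2, h3⟩ := interior_subset h
    exact absurd (hV Z hZ h1.symm h2) (not_le.2 h3)
  have hc0 : (∫ u, q u ∂nuI) ≤ V := by
    have := hV (fun _ => 1) (Adm.const zero_le_one) (by simp) (by simp [phiR_one hφ, hβ.le])
    simpa using this
  set I := ∫ u, q u ∂nuI with hI
  have hIntr := sepSet_interior hφ (q := q) hβ (c := I - 1) (by linarith)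
  obtain ⟨f, hf⟩ := geometric_hahn_banach_open_point (sepSet_convex hφ hq).interior
    isOpen_interior hnot
  have hle : ∀ p ∈ sepSet φ q, f p ≤ f (1, β, V) := by
    intro p hp
    apply closure_minimal (fun x hx => le_of_lt (hf x hx)) <| isClosed_Iic.preimage f.continuous
    rw [(sepSet_convex hφ hq).closure_interior_eq_closure_of_nonempty_interior ⟨_, hIntr⟩]
    exact subset_closure hp
  have hlin : ∀ a b c : ℝ, f (a, b, c) = a * f (1, 0, 0) + b * f (0, 1, 0) + c * f (0, 0, 1) := by
    intro a b c
    have : ((a, b, c) : ℝ × ℝ × ℝ)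
        = a • (1, 0, 0) + b • (0, 1, 0) + c • (0, 0, 1) := by simp
    rw [this, map_add, map_add, map_smul, map_smul, map_smul]; rfl
  set α := f (1, 0, 0)
  set γ := f (0, 1, 0)
  set δ := f (0, 0, 1)
  have hγ : γ ≤ 0 := by
    by_contra h
    push Not at h
    obtain ⟨n, hn⟩ := exists_nat_gt ((f (1, β, V) - α - (I - 1) * δ) / γ)
    have := hle _ (sepSet_const (φ := φ) (q := q) (a := 1) (b := n) (c := I - 1) zero_le_one
      (by rw [phiR_one hφ]; positivity) (by linarith))
    rw [hlin 1 n] at this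
    rw [div_lt_iff₀ h] at hn
    linarith
  have hδ : 0 ≤ δ := by
    by_contra h
    push Not at h
    obtain ⟨n, hn⟩ := exists_nat_gt ((f (1, β, V) - α - β * γ - (I - 1) * δ) / (-δ))
    have := hle _ (sepSet_const (φ := φ) (q := q) (a := 1) (b := β) (c := I - 1 - n) zero_le_one
      (by rw [phiR_one hφ]; positivity) (by
        have : (0:ℝ) ≤ n := by positivity
        linarith))
    rw [hlin 1 β (I - 1 - n)] at this
    rw [div_lt_iff₀ (by linarith)] at hn
    nlinarith
  have hδ' : 0 < δ := by
    have := hf _ hIntr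
    rw [hlin, hlin] at this
    rcases hδ.eq_or_lt with h | h
    · rw [← h] at this; simp at this
    · exact h
  refine ⟨-γ / δ, -α / δ, div_nonneg (by linarith) hδ, fun Z hZ => ?_⟩
  have key : ∀ c, c < (∫ u, Z u * q u ∂nuI) →
      c ≤ V - (-α / δ) - (-γ / δ) * β + (-α / δ) * (∫ u, Z u ∂nuI)
        + (-γ / δ) * (∫ u, phiR φ (Z u) ∂nuI) := by
    intro c hc
    have := hle (_, _, c) ⟨Z, hZ, rfl, le_rfl, hc⟩
    rw [hlin, hlin 1] at this
    have h2 : V - (-α / δ) - (-γ / δ) * β + (-α / δ) * (∫ u, Z u ∂nuI)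
        + (-γ / δ) * (∫ u, phiR φ (Z u) ∂nuI)
        = (V * δ + α + γ * β - α * (∫ u, Z u ∂nuI) - γ * (∫ u, phiR φ (Z u) ∂nuI)) / δ := by
      field_simp
      ring
    rw [h2, le_div_iff₀ hδ']
    linarith
  have := le_of_forall_lt_imp_le_of_dense key
  linarith

/-- Case `t > 0`: the dual objective is bounded by the primal value. -/
lemma dual_pos {φ : ℝ → EReal} (hφ : IsDivergenceFunction φ) {q : ℝ → ℝ}
    (hqm : MonotoneOn q (Set.Ioo (0:ℝ) 1)) (hq : Integrable q nuI) {t m C : ℝ} (ht : 0 < t)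
    (h : ∀ Z, Adm Z →
      (∫ u, Z u * q u ∂nuI) - m * (∫ u, Z u ∂nuI) - t * (∫ u, phiR φ (Z u) ∂nuI) ≤ C) :
    Integrable (fun u => psiR φ (q u / t - m / t)) nuI ∧
      t * (∫ u, psiR φ (q u / t - m / t) ∂nuI) ≤ C := by
  set y : ℝ → ℝ := fun u => q u / t - m / t with hy
  have hym : MonotoneOn y (Set.Ioo (0:ℝ) 1) := by
    intro u hu v hv huv
    have := hqm hu hv huv
    simp only [hy]; gcongr
  have hyi : Integrable y nuI := (hq.div_const t).sub (integrable_const _)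
  set z0 := zst φ hφ 0 with hz0
  set g : ℝ → ℝ := fun u => y u * z0 - phiR φ z0 with hg
  have hgi : Integrable g nuI := (hyi.mul_const z0).sub (integrable_const _)
  let Z : ℕ → ℝ → ℝ := fun n u => zst φ hφ (min (y u) n)
  have hZ : ∀ n, Adm (Z n) := fun n =>
    ⟨fun u hu v hv huv => zst_mono hφ (min_le_min_right _ (hym hu hv huv)),
      fun u => zst_nonneg hφ _, zst φ hφ n, fun u => zst_mono hφ (min_le_right _ _)⟩
  let H : ℕ → ℝ → ℝ := fun n u => y u * Z n u - phiR φ (Z n u)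
  have hyZ : ∀ n, Integrable (fun u => y u * Z n u) nuI := fun n => by
    have := (hZ n).integrable_mul hyi
    simpa only [mul_comm] using this
  have hHi : ∀ n, Integrable (H n) nuI := fun n => (hyZ n).sub ((hZ n).integrable_phi hφ)
  have hHC : ∀ n, (∫ u, H n u ∂nuI) ≤ C / t := by
    intro n
    have h1 := h (Z n) (hZ n)
    have h2 : (∫ u, H n u ∂nuI) = ((∫ u, Z n u * q u ∂nuI) - m * (∫ u, Z n u ∂nuI)) / t
        - (∫ u, phiR φ (Z n u) ∂nuI) := by
      rw [integral_sub (hyZ n) ((hZ n).integrable_phi hφ)]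
      congr 1
      rw [← integral_const_mul, ← integral_sub ((hZ n).integrable_mul hq)
        ((hZ n).integrable.const_mul m), ← integral_div]
      congr 1; ext u; simp only [hy]; ring
    rw [h2, le_div_iff₀ ht, sub_mul, div_mul_cancel₀ _ ht.ne']
    linarith
  have hHg : ∀ n u, g u ≤ H n u := by
    intro n u
    rcases le_total (y u) n with hu | hu
    · have : H n u = psiR φ (y u) := by
        simp only [H, Z, min_eq_left hu, psiR_eq hφ]
      rw [this]; exact young hφ _ _ (zst_nonneg hφ _)
    · have e : Z n u = zst φ hφ n := by simp only [Z, min_eq_right hu]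
      have h1 := zst_max hφ n z0 (zst_nonneg hφ _)
      have h2 : z0 ≤ zst φ hφ n := zst_mono hφ (by positivity)
      simp only [H, e, hg]
      nlinarith
  have hHlim : ∀ u, ∀ᶠ n : ℕ in Filter.atTop, H n u = psiR φ (y u) := by
    intro u
    obtain ⟨N, hN⟩ := exists_nat_ge (y u)
    filter_upwards [Filter.eventually_ge_atTop N] with n hn
    have : y u ≤ n := hN.trans (by exact_mod_cast hn)
    simp only [H, Z, min_eq_left this, psiR_eq hφ]
  have hpm : AEMeasurable (fun u => psiR φ (y u)) nuI :=
    (psiR_mono hφ).measurable.comp_aemeasurable hyi.aemeasurable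
  have hpg : ∀ u, 0 ≤ psiR φ (y u) - g u := fun u =>
    sub_nonneg.2 (young hφ _ _ (zst_nonneg hφ _))
  have hfat : (∫⁻ u, ENNReal.ofReal (psiR φ (y u) - g u) ∂nuI)
      ≤ ENNReal.ofReal (C / t - ∫ u, g u ∂nuI) := by
    calc (∫⁻ u, ENNReal.ofReal (psiR φ (y u) - g u) ∂nuI)
        = ∫⁻ u, Filter.liminf (fun n => ENNReal.ofReal (H n u - g u)) Filter.atTop ∂nuI := by
          congr 1; ext u
          refine (Filter.Tendsto.liminf_eq ?_).symm
          refine tendsto_const_nhds.congr' ?_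
          filter_upwards [hHlim u] with n hn
          rw [hn]
      _ ≤ Filter.liminf (fun n => ∫⁻ u, ENNReal.ofReal (H n u - g u) ∂nuI) Filter.atTop :=
          lintegral_liminf_le' fun n => ((hHi n).sub hgi).aemeasurable.ennreal_ofReal
      _ ≤ ENNReal.ofReal (C / t - ∫ u, g u ∂nuI) := by
          refine Filter.liminf_le_of_le (by isBoundedDefault) ?_
          intro b hb
          obtain ⟨n, hn⟩ := hb.exists
          refine hn.trans ?_
          have hs : Integrable (fun u => H n u - g u) nuI := (hHi n).sub hgi
          rw [← ofReal_integral_eq_lintegral_ofReal hs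
            (Filter.Eventually.of_forall fun u => sub_nonneg.2 (hHg n u)),
            integral_sub (hHi n) hgi]
          exact ENNReal.ofReal_le_ofReal (by linarith [hHC n])
  have hIntr : Integrable (fun u => psiR φ (y u) - g u) nuI := by
    refine ⟨(hpm.sub hgi.aemeasurable).aestronglyMeasurable, ?_⟩
    rw [hasFiniteIntegral_iff_ofReal (Filter.Eventually.of_forall hpg)]
    exact lt_of_le_of_lt hfat ENNReal.ofReal_lt_top
  have hpi : Integrable (fun u => psiR φ (y u)) nuI := by
    refine (hIntr.add hgi).congr (Filter.Eventually.of_forall fun u => ?_)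
    simp
  refine ⟨hpi, ?_⟩
  rw [← ofReal_integral_eq_lintegral_ofReal hIntr (Filter.Eventually.of_forall hpg),
    integral_sub hpi hgi] at hfat
  have hCg : 0 ≤ C / t - ∫ u, g u ∂nuI := by
    have := integral_mono hgi (hHi 0) (hHg 0)
    linarith [hHC 0]
  have := (ENNReal.ofReal_le_ofReal_iff hCg).1 hfat
  have h3 : (∫ u, psiR φ (y u) ∂nuI) ≤ C / t := by linarith
  rw [le_div_iff₀ ht] at h3
  linarith

/-- Case `t = 0`: the quantile function is bounded by the multiplier. -/
lemma dual_zero {q : ℝ → ℝ}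
    (hqm : MonotoneOn q (Set.Ioo (0:ℝ) 1)) (hq : Integrable q nuI) {m C : ℝ}
    (h : ∀ Z, Adm Z → (∫ u, Z u * q u ∂nuI) - m * (∫ u, Z u ∂nuI) ≤ C) :
    ∀ u ∈ Set.Ioo (0:ℝ) 1, q u ≤ m := by
  intro c hc
  by_contra hcon
  push Not at hcon
  obtain ⟨k, hk⟩ := exists_nat_gt (C / ((q c - m) * (1 - c)))
  have hpos : 0 < (q c - m) * (1 - c) := mul_pos (by linarith) (by linarith [hc.2])
  rw [div_lt_iff₀ hpos] at hk
  set Z : ℝ → ℝ := (Set.Ici c).indicator (fun _ => (k:ℝ)) with hZdef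
  have hZ : Adm Z := by
    refine ⟨fun u _ v _ huv => ?_, fun u => ?_, k, fun u => ?_⟩
    · by_cases hu : c ≤ u
      · simp [hZdef, hu, hu.trans huv]
      · simp only [hZdef, Set.indicator, Set.mem_Ici, hu, if_false]
        split_ifs <;> positivity
    · simp only [hZdef, Set.indicator]; split_ifs <;> positivity
    · simp only [hZdef, Set.indicator]; split_ifs <;> simp
  have h1 := h Z hZ
  rw [← integral_const_mul, ← integral_sub (hZ.integrable_mul hq) (hZ.integrable.const_mul m)] at h1
  have hIZ : (∫ u, Z u ∂nuI) = k * (1 - c) := by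
    rw [hZdef, integral_indicator_const _ measurableSet_Ici, measureReal_restrict_apply
      measurableSet_Ici]
    have : Set.Ici c ∩ Set.Icc (0:ℝ) 1 = Set.Icc c 1 := by
      ext u; simp only [Set.mem_inter_iff, Set.mem_Ici, Set.mem_Icc]
      exact ⟨fun ⟨a, b, d⟩ => ⟨a, d⟩, fun ⟨a, b⟩ => ⟨a, hc.1.le.trans a, b⟩⟩
    rw [this, Real.volume_real_Icc_of_le hc.2.le, smul_eq_mul, mul_comm]
  have h2 : (∫ u, (q c - m) * Z u ∂nuI) ≤ ∫ u, (Z u * q u - m * Z u) ∂nuI := by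
    refine integral_mono_ae (hZ.integrable.const_mul _)
      ((hZ.integrable_mul hq).sub (hZ.integrable.const_mul m)) ?_
    filter_upwards [nuI_ae] with u hu
    by_cases hcu : c ≤ u
    · have := hqm hc hu hcu
      nlinarith [hZ.nonneg u]
    · have : Z u = 0 := by simp [hZdef, hcu]
      simp [this]
  rw [integral_const_mul, hIZ] at h2
  nlinarith

/-- Extend an admissible density to a monotone extended-real density on the closed interval. -/
lemma sigma_of_adm {Z : ℝ → ℝ} (hZ : Adm Z) : ∃ σ : ℝ → ℝ≥0∞,
    MonotoneOn σ (Set.Icc (0:ℝ) 1) ∧ ∀ u ∈ Set.Ioo (0:ℝ) 1, σ u = ENNReal.ofReal (Z u) := by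
  classical
  refine ⟨fun u => if u ≤ 0 then 0 else if 1 ≤ u then ⊤ else ENNReal.ofReal (Z u), ?_, ?_⟩
  · intro u hu v hv huv
    simp only
    by_cases h1 : u ≤ 0
    · simp [h1]
    have h2 : ¬ v ≤ 0 := fun h => h1 (huv.trans h)
    by_cases h3 : 1 ≤ v
    · simp [h2, h3]
    have h4 : ¬ 1 ≤ u := fun h => h3 (h.trans huv)
    simp only [h1, h2, h3, h4, if_false]
    push Not at h1 h2 h3 h4
    exact ENNReal.ofReal_le_ofReal (hZ.mono ⟨h1, h4⟩ ⟨h2, h3⟩ huv)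
  · rintro u ⟨h1, h2⟩
    simp [not_le.2 h1, not_le.2 h2]

variable {Ω : Type*} [MeasurableSpace Ω]

/-- Spectral (Kusuoka) representation: `ρ_{φ,β}(X) = sup_σ ∫₀¹ σ(u)·F_X⁻¹(u) du`, the
supremum over all non-decreasing `σ : [0,1] → [0,∞]` with `∫₀¹ σ = 1` and
`∫₀¹ φ(σ(u)) du ≤ β`. -/
theorem rhoDiv_spectral_representation (P : Measure Ω) [IsProbabilityMeasure P]
    (φ : ℝ → EReal) (hφ : IsDivergenceFunction φ) (β : ℝ) (hβ : 0 < β)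
    (X : Ω → ℝ) (hX : Integrable X P)
    (hXpsi : ∃ t : ℝ, 0 < t ∧ Integrable (fun ω => psiR φ (t * |X ω|)) P) :
    rhoDiv φ β P X = sSup {v : EReal | ∃ σ : ℝ → ℝ≥0∞,
      MonotoneOn σ (Set.Icc (0 : ℝ) 1) ∧
      (∫⁻ u in Set.Icc (0 : ℝ) 1, σ u) = 1 ∧
      Integrable (fun u => (φ ((σ u).toReal)).toReal)
        (MeasureTheory.volume.restrict (Set.Icc (0 : ℝ) 1)) ∧
      (∫ u in Set.Icc (0 : ℝ) 1, (φ ((σ u).toReal)).toReal) ≤ β ∧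
      Integrable (fun u => (σ u).toReal * quantile P X u)
        (MeasureTheory.volume.restrict (Set.Icc (0 : ℝ) 1)) ∧
      v = ((∫ u in Set.Icc (0 : ℝ) 1, (σ u).toReal * quantile P X u : ℝ) : EReal)} := by
  have hXm : AEMeasurable X P := hX.aemeasurable
  have hid := quantile_ident P X hXm
  have hqm := quantile_mono P X hXm
  have hq : Integrable (quantile P X) nuI := hid.integrable_iff.2 hX
  apply le_antisymm
  · set S := sSup {v : EReal | ∃ σ : ℝ → ℝ≥0∞,
      MonotoneOn σ (Set.Icc (0 : ℝ) 1) ∧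
      (∫⁻ u in Set.Icc (0 : ℝ) 1, σ u) = 1 ∧
      Integrable (fun u => (φ ((σ u).toReal)).toReal)
        (MeasureTheory.volume.restrict (Set.Icc (0 : ℝ) 1)) ∧
      (∫ u in Set.Icc (0 : ℝ) 1, (φ ((σ u).toReal)).toReal) ≤ β ∧
      Integrable (fun u => (σ u).toReal * quantile P X u)
        (MeasureTheory.volume.restrict (Set.Icc (0 : ℝ) 1)) ∧
      v = ((∫ u in Set.Icc (0 : ℝ) 1, (σ u).toReal * quantile P X u : ℝ) : EReal)} with hS
    have hfeas : ∀ Z, Adm Z → (∫ u, Z u ∂nuI) = 1 → (∫ u, phiR φ (Z u) ∂nuI) ≤ β →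
        ((∫ u, Z u * quantile P X u ∂nuI : ℝ) : EReal) ≤ S := by
      intro Z hZ h1 h2
      obtain ⟨σ, hσm, hσ⟩ := sigma_of_adm hZ
      have e1 : (fun u => (φ ((σ u).toReal)).toReal) =ᵐ[nuI] fun u => phiR φ (Z u) := by
        filter_upwards [nuI_ae] with u hu
        rw [hσ u hu, ENNReal.toReal_ofReal (hZ.nonneg u)]; rfl
      have e2 : (fun u => (σ u).toReal * quantile P X u)
          =ᵐ[nuI] fun u => Z u * quantile P X u := by
        filter_upwards [nuI_ae] with u hu
        rw [hσ u hu, ENNReal.toReal_ofReal (hZ.nonneg u)]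
      refine le_sSup ⟨σ, hσm, ?_, (hZ.integrable_phi hφ).congr e1.symm, ?_,
        (hZ.integrable_mul hq).congr e2.symm, ?_⟩
      · have : (∫⁻ u, σ u ∂nuI) = ∫⁻ u, ENNReal.ofReal (Z u) ∂nuI := by
          apply lintegral_congr_ae
          filter_upwards [nuI_ae] with u hu using hσ u hu
        rw [this, ← ofReal_integral_eq_lintegral_ofReal hZ.integrable
          (Filter.Eventually.of_forall hZ.nonneg), h1, ENNReal.ofReal_one]
      · rw [integral_congr_ae e1]; exact h2
      · rw [integral_congr_ae e2]
    rcases eq_or_ne S ⊤ with htop | htop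
    · rw [htop]; exact le_top
    have hbot : S ≠ ⊥ := by
      have := hfeas (fun _ => 1) (Adm.const zero_le_one) (by simp) (by simp [phiR_one hφ, hβ.le])
      intro h
      rw [h, le_bot_iff] at this
      exact EReal.coe_ne_bot _ this
    obtain ⟨V, hV⟩ : ∃ V : ℝ, S = (V : EReal) := ⟨_, (EReal.coe_toReal htop hbot).symm⟩
    rw [hV] at hfeas ⊢
    obtain ⟨t, m, ht, hL⟩ := lagrange hφ hq hβ (V := V) fun Z hZ h1 h2 => by
      exact_mod_cast hfeas Z hZ h1 h2
    rcases ht.eq_or_lt with h0 | htpos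
    · subst h0
      simp only [zero_mul, sub_zero] at hL
      have hqle := dual_zero hqm hq hL
      have hmV : m ≤ V := by
        have := hL (fun _ => 0) (Adm.const le_rfl)
        simp at this
        linarith
      have hXle : ∀ᵐ ω ∂P, X ω ≤ m := by
        refine hid.ae_mem_snd (t := Set.Iic m) measurableSet_Iic ?_
        filter_upwards [nuI_ae] with u hu using hqle u hu
      by_contra hcon
      obtain ⟨r, hr1, hr2⟩ := EReal.lt_iff_exists_real_btwn.1 (not_le.1 hcon)
      have hr1' : V < r := by exact_mod_cast hr1
      have hψ0 : 0 ≤ psiR φ 0 := by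
        have := young hφ 0 1 zero_le_one
        rw [phiR_one hφ] at this; linarith
      set s := (r - V) / (β + psiR φ 0) with hs
      have hspos : 0 < s := div_pos (by linarith) (by linarith)
      have hub : ∀ᵐ ω ∂P, psiR φ (X ω / s - m / s) ≤ psiR φ 0 := by
        filter_upwards [hXle] with ω hω
        apply psiR_mono hφ
        rw [← sub_div]
        exact div_nonpos_of_nonpos_of_nonneg (by linarith) hspos.le
      have hlb : ∀ ω, X ω / s - m / s ≤ psiR φ (X ω / s - m / s) := by
        intro ω
        have := young hφ (X ω / s - m / s) 1 zero_le_one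
        rw [phiR_one hφ] at this; linarith
      have hi : Integrable (fun ω => psiR φ (X ω / s - m / s)) P := by
        refine integrable_of_le_of_le ?_ (Filter.Eventually.of_forall hlb) hub
          ((hX.div_const s).sub (integrable_const _)) (integrable_const _)
        exact ((psiR_mono hφ).measurable.comp_aemeasurable
          ((hXm.div_const s).sub aemeasurable_const)).aestronglyMeasurable
      have hIle : (∫ ω, psiR φ (X ω / s - m / s) ∂P) ≤ psiR φ 0 := by
        have := integral_mono_ae hi (integrable_const (psiR φ 0)) hub
        simpa using this
      have hle : rhoDiv φ β P X ≤ (r : EReal) := by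
        refine (iInf_le_of_le (m / s) (iInf_le_of_le s (iInf_le_of_le hspos le_rfl))).trans ?_
        rw [rhoObj, if_pos hi]
        have e1 : s * (m / s) = m := by field_simp
        have e2 : s * (β + psiR φ 0) = r - V := div_mul_cancel₀ _ (by linarith)
        have : s * (β + m / s + ∫ ω, psiR φ (X ω / s - m / s) ∂P) ≤ r := by
          nlinarith
        exact_mod_cast this
      exact absurd hle (not_le.2 hr2)
    · obtain ⟨hi, hle⟩ := dual_pos hφ hqm hq htpos hL
      have hid2 : ProbabilityTheory.IdentDistrib (fun u => psiR φ (quantile P X u / t - m / t))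
          (fun ω => psiR φ (X ω / t - m / t)) nuI P :=
        hid.comp (u := fun x => psiR φ (x / t - m / t))
          ((psiR_mono hφ).measurable.comp (by fun_prop))
      rw [hid2.integral_eq] at hle
      refine (iInf_le_of_le (m / t) (iInf_le_of_le t (iInf_le_of_le htpos le_rfl))).trans ?_
      rw [rhoObj, if_pos (hid2.integrable_iff.1 hi)]
      have e1 : t * (m / t) = m := by field_simp
      have : t * (β + m / t + ∫ ω, psiR φ (X ω / t - m / t) ∂P) ≤ V := by
        nlinarith
      exact_mod_cast this
  · refine sSup_le ?_
    rintro v ⟨σ, hσm, hσ1, hφi, hφβ, hσq, rfl⟩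
    refine le_iInf fun μ => le_iInf fun t => le_iInf fun ht => ?_
    rw [rhoObj]
    split_ifs with hi
    swap
    · exact le_top
    have hid2 : ProbabilityTheory.IdentDistrib (fun u => psiR φ (quantile P X u / t - μ))
        (fun ω => psiR φ (X ω / t - μ)) nuI P :=
      hid.comp (u := fun x => psiR φ (x / t - μ))
        ((psiR_mono hφ).measurable.comp (by fun_prop))
    have hi2 := hid2.integrable_iff.2 hi
    rw [← hid2.integral_eq]
    have hσae : AEMeasurable σ nuI := aemeasurable_restrict_of_monotoneOn measurableSet_Icc hσm
    have hσint : Integrable (fun u => (σ u).toReal) nuI :=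
      integrable_toReal_of_lintegral_ne_top hσae (by rw [hσ1]; simp)
    have hσI : (∫ u, (σ u).toReal ∂nuI) = 1 := by
      rw [integral_toReal hσae (ae_lt_top' hσae (by rw [hσ1]; simp)), hσ1]; simp
    have hY : ∀ u, (σ u).toReal * quantile P X u / t - μ * (σ u).toReal
        ≤ (φ ((σ u).toReal)).toReal + psiR φ (quantile P X u / t - μ) := by
      intro u
      have := young hφ (quantile P X u / t - μ) (σ u).toReal ENNReal.toReal_nonneg
      have e : (quantile P X u / t - μ) * (σ u).toReal
        = (σ u).toReal * quantile P X u / t - μ * (σ u).toReal := by ring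
      rw [e, phiR] at this
      linarith
    have hI := integral_mono (μ := nuI) ((hσq.div_const t).sub (hσint.const_mul μ))
      (hφi.add hi2) hY
    simp only [Pi.sub_apply, Pi.add_apply] at hI
    rw [integral_sub (hσq.div_const t) (hσint.const_mul μ), integral_add hφi hi2,
      integral_div, integral_const_mul, hσI] at hI
    have h3 : (∫ u, (σ u).toReal * quantile P X u ∂nuI) / t
        ≤ β + μ + ∫ u, psiR φ (quantile P X u / t - μ) ∂nuI := by linarith
    rw [div_le_iff₀ ht, mul_comm] at h3
    exact_mod_cast h3
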